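/- Let A and B be n×n complex positive definite matrices and let h, h' be reals with 1 < h' ≤ h such that h'·A ≤ B ≤ h·A in the Loewner order. Let Φ be a positive linear map from n×n complex matrices to m×m complex matrices such that Φ(A) and Φ(B) are positive definite. Then for every p ∈ [0,1], with r := min{p, 1−p} and R := max{p, 1−p}, the following chain holds in the Loewner order: (K(h',2)^r / K(h,2)^R)·Φ(A #_p B) ≤ (1/K(h,2)^R)·Φ(A ∇_p B) ≤ Φ(A) #_p Φ(B) ≤ (1/K(h',2)^r)·Φ(A ∇_p B) ≤ (K(h,2)^R / K(h',2)^r)·Φ(A #_p B). -/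

import Mathlib

open Matrix ComplexOrder

/-- Real power of a (Hermitian) complex matrix via the continuous functional calculus,
corresponding to `Matrix.PosDef.rpow` on positive definite matrices. -/
noncomputable def mrpow {n : Type*} [Fintype n] [DecidableEq n]
    (A : Matrix n n ℂ) (r : ℝ) : Matrix n n ℂ :=
  cfc (fun t : ℝ => t ^ r) A

/-- The Loewner order: `loe X Y` means `Y - X` is positive semidefinite. -/
def loe {n : Type*} [Fintype n] (X Y : Matrix n n ℂ) : Prop :=
  (Y - X).PosSemidef

/-- `A ♮ᵣ B = A^{1/2} (A^{-1/2} B A^{-1/2})^r A^{1/2}`; for `r ∈ [0,1]` this is the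
weighted geometric mean `A #ᵣ B`. -/
noncomputable def natu {n : Type*} [Fintype n] [DecidableEq n]
    (A B : Matrix n n ℂ) (r : ℝ) : Matrix n n ℂ :=
  mrpow A (1 / 2) * mrpow (mrpow A (-(1 / 2)) * B * mrpow A (-(1 / 2))) r * mrpow A (1 / 2)

/-- The Tsallis relative operator entropy `T_p(A|B) = (A #_p B - A) / p`. -/
noncomputable def TsallisEntropy {n : Type*} [Fintype n] [DecidableEq n]
    (A B : Matrix n n ℂ) (p : ℝ) : Matrix n n ℂ :=
  (1 / p : ℝ) • (natu A B p - A)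

/-!
On the spectrum of `C = A^{-1/2} B A^{-1/2}`, which lies in `[h', h]`, the weighted arithmetic and
geometric means of `1` and `t` satisfy `K(t)^r t^p ≤ 1 - p + p t ≤ K(t)^R t^p`. For `p = r ≤ 1/2`
the left inequality is Bernoulli's inequality, since `K(t) t = ((1 + t) / 2)²`; the other cases are
analogous or follow from the symmetry `(t, p) ↦ (t⁻¹, 1 - p)`. As `K` increases on `[1, ∞)`, it may
be replaced by `K(h')` on the left and by `K(h)` on the right; functional calculus in `C` and
conjugation by `A^{1/2}` then compare `A #_p B` with `A ∇_p B`. A positive map preserves both this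
comparison and the hypotheses `h' A ≤ B ≤ h A`, so that the comparison also holds for `Φ(A)` and
`Φ(B)`.
-/

section Scalar

/-- The Kantorovich constant `K(t, 2)`, meaningful for `t > 0`. -/
noncomputable def kantorovich (t : ℝ) : ℝ :=
  (t + 1) ^ (2 : ℕ) / (4 * t)

lemma kantorovich_pos {t : ℝ} (ht : 0 < t) : 0 < kantorovich t := by
  unfold kantorovich
  positivity

lemma kantorovich_inv (t : ℝ) : kantorovich t⁻¹ = kantorovich t := by
  rcases eq_or_ne t 0 with rfl | ht
  · simp [kantorovich]
  · unfold kantorovich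
    field_simp
    ring

lemma kantorovich_mul_self {t : ℝ} (ht : t ≠ 0) : kantorovich t * t = ((1 + t) / 2) ^ 2 := by
  unfold kantorovich
  field_simp
  ring

lemma kantorovich_le_kantorovich {s t : ℝ} (hs : 0 < s) (hst : s ≤ t) (h1 : 1 ≤ s * t) :
    kantorovich s ≤ kantorovich t := by
  unfold kantorovich
  rw [div_le_div_iff₀ (by linarith) (by linarith)]
  have hfactor : 0 ≤ (t - s) * (s * t - 1) := mul_nonneg (by linarith) (by linarith)
  linarith

lemma kantorovich_rpow_mul_rpow {t : ℝ} (ht : 0 < t) (p : ℝ) :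
    kantorovich t ^ p * t ^ p = (1 + (t - 1) / 2) ^ (2 * p) := by
  rw [← Real.mul_rpow (kantorovich_pos ht).le ht.le, kantorovich_mul_self ht.ne',
    Real.rpow_mul (by linarith), Real.rpow_two]
  ring_nf

lemma kantorovich_rpow_mul_rpow_inv {t : ℝ} (ht : 0 < t) (p q : ℝ) :
    kantorovich t ^ q * t ^ p = t * (kantorovich t⁻¹ ^ q * t⁻¹ ^ (1 - p)) := by
  rw [kantorovich_inv, Real.inv_rpow ht.le, ← Real.rpow_neg ht.le, neg_sub,
    Real.rpow_sub_one ht.ne']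
  field_simp

lemma one_sub_add_mul_eq_mul_inv {t : ℝ} (ht : t ≠ 0) (p : ℝ) :
    1 - p + p * t = t * (1 - (1 - p) + (1 - p) * t⁻¹) := by
  field_simp
  ring

lemma kantorovich_rpow_mul_rpow_le {t p : ℝ} (ht : 0 < t) (hp0 : 0 ≤ p) (hp : p ≤ 1 / 2) :
    kantorovich t ^ p * t ^ p ≤ 1 - p + p * t := by
  rw [kantorovich_rpow_mul_rpow ht]
  have bernoulli := rpow_one_add_le_one_add_mul_self (s := (t - 1) / 2) (p := 2 * p)
    (by linarith) (by linarith) (by linarith)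
  linarith

lemma le_kantorovich_rpow_mul_rpow {t p : ℝ} (ht : 0 < t) (hp : 1 / 2 ≤ p) :
    1 - p + p * t ≤ kantorovich t ^ p * t ^ p := by
  rw [kantorovich_rpow_mul_rpow ht]
  have bernoulli := one_add_mul_self_le_rpow_one_add (s := (t - 1) / 2) (p := 2 * p)
    (by linarith) (by linarith)
  linarith

lemma kantorovich_rpow_min_mul_rpow_le {t p : ℝ} (ht : 0 < t) (hp0 : 0 ≤ p) (hp1 : p ≤ 1) :
    kantorovich t ^ min p (1 - p) * t ^ p ≤ 1 - p + p * t := by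
  rcases le_total p (1 / 2) with hp | hp
  · rw [min_eq_left (by linarith)]
    exact kantorovich_rpow_mul_rpow_le ht hp0 hp
  · rw [min_eq_right (by linarith), kantorovich_rpow_mul_rpow_inv ht,
      one_sub_add_mul_eq_mul_inv ht.ne']
    gcongr
    exact kantorovich_rpow_mul_rpow_le (inv_pos.2 ht) (by linarith) (by linarith)

lemma le_kantorovich_rpow_max_mul_rpow {t : ℝ} (ht : 0 < t) (p : ℝ) :
    1 - p + p * t ≤ kantorovich t ^ max p (1 - p) * t ^ p := by
  rcases le_total p (1 / 2) with hp | hp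
  · rw [max_eq_right (by linarith), kantorovich_rpow_mul_rpow_inv ht,
      one_sub_add_mul_eq_mul_inv ht.ne']
    gcongr
    exact le_kantorovich_rpow_mul_rpow (inv_pos.2 ht) (by linarith)
  · rw [max_eq_left (by linarith)]
    exact le_kantorovich_rpow_mul_rpow ht hp

end Scalar

section Perspective

open CFC Set
open scoped Ring

variable {A : Type*} [PartialOrder A] [Ring A] [StarRing A] [TopologicalSpace A]
  [StarOrderedRing A] [Algebra ℝ A] [ContinuousFunctionalCalculus ℝ A IsSelfAdjoint]
  [NonnegSpectrumClass ℝ A] [IsSemitopologicalRing A] {a b : A}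

/-- The operator perspective `a^{1/2} f(a^{-1/2} b a^{-1/2}) a^{1/2}` of `f`, meaningful for
strictly positive `a` and self-adjoint `b`. It turns inequalities between functions into
inequalities between operator means. -/
noncomputable def operatorPerspective (f : ℝ → ℝ) (a b : A) : A :=
  conjSqrt a (cfc f (conjSqrt a⁻¹ʳ b))

/-- The weighted geometric mean `a #_p b`. -/
noncomputable def weightedGeomMean (a b : A) (p : ℝ) : A :=
  operatorPerspective (fun t => t ^ p) a b

lemma operatorPerspective_mono {f g : ℝ → ℝ}
    (hf : ContinuousOn f (spectrum ℝ (conjSqrt a⁻¹ʳ b)))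
    (hg : ContinuousOn g (spectrum ℝ (conjSqrt a⁻¹ʳ b)))
    (hfg : ∀ t ∈ spectrum ℝ (conjSqrt a⁻¹ʳ b), f t ≤ g t) :
    operatorPerspective f a b ≤ operatorPerspective g a b :=
  conjSqrt_le_conjSqrt (cfc_mono hfg)

lemma operatorPerspective_const_mul {f : ℝ → ℝ}
    (hf : ContinuousOn f (spectrum ℝ (conjSqrt a⁻¹ʳ b))) (c : ℝ) :
    operatorPerspective (fun t => c * f t) a b = c • operatorPerspective f a b := by
  rw [operatorPerspective, cfc_const_mul c f _, map_smul, operatorPerspective]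

lemma isSelfAdjoint_conjSqrt (c : A) (hb : IsSelfAdjoint b) : IsSelfAdjoint (conjSqrt c b) :=
  hb.conjugate_self (sqrt_nonneg c).isSelfAdjoint

variable [T2Space A]

lemma conjSqrt_ringInverse_smul_self (ha : IsStrictlyPositive a) (c : ℝ) :
    conjSqrt a⁻¹ʳ (c • a) = algebraMap ℝ A c := by
  rw [map_smul, conjSqrt_ringInverse_self a, Algebra.algebraMap_eq_smul_one]

lemma operatorPerspective_affine (ha : IsStrictlyPositive a) (hb : IsSelfAdjoint b) (c d : ℝ) :
    operatorPerspective (fun t => c + d * t) a b = c • a + d • b := by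
  have hC := isSelfAdjoint_conjSqrt a⁻¹ʳ hb
  rw [operatorPerspective, cfc_const_add c _ _, cfc_const_mul_id d _, map_add, map_smul,
    conjSqrt_conjSqrt_ringInverse a b, Algebra.algebraMap_eq_smul_one, map_smul, conjSqrt_one a]

variable [StarModule ℝ A]

lemma spectrum_conjSqrt_ringInverse_subset_Ici (ha : IsStrictlyPositive a) {c : ℝ}
    (hab : c • a ≤ b) : spectrum ℝ (conjSqrt a⁻¹ʳ b) ⊆ Ici c := by
  have hb : IsSelfAdjoint b := .of_ge hab (.smul (.all c) ha.isSelfAdjoint)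
  have hle : algebraMap ℝ A c ≤ conjSqrt a⁻¹ʳ b :=
    conjSqrt_ringInverse_smul_self ha c ▸ conjSqrt_le_conjSqrt hab
  exact (algebraMap_le_iff_le_spectrum (isSelfAdjoint_conjSqrt _ hb)).1 hle

lemma spectrum_conjSqrt_ringInverse_subset_Iic (ha : IsStrictlyPositive a) {c : ℝ}
    (hab : b ≤ c • a) : spectrum ℝ (conjSqrt a⁻¹ʳ b) ⊆ Iic c := by
  have hb : IsSelfAdjoint b := .of_le hab (.smul (.all c) ha.isSelfAdjoint)
  have hle : conjSqrt a⁻¹ʳ b ≤ algebraMap ℝ A c :=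
    conjSqrt_ringInverse_smul_self ha c ▸ conjSqrt_le_conjSqrt hab
  exact (le_algebraMap_iff_spectrum_le (isSelfAdjoint_conjSqrt _ hb)).1 hle

lemma kantorovich_rpow_min_smul_weightedGeomMean_le (ha : IsStrictlyPositive a) {c p : ℝ}
    (hc : 1 ≤ c) (hab : c • a ≤ b) (hp0 : 0 ≤ p) (hp1 : p ≤ 1) :
    kantorovich c ^ min p (1 - p) • weightedGeomMean a b p ≤ (1 - p) • a + p • b := by
  have hb : IsSelfAdjoint b := .of_ge hab (.smul (.all c) ha.isSelfAdjoint)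
  have hpow : ContinuousOn (fun t : ℝ => t ^ p) (spectrum ℝ (conjSqrt a⁻¹ʳ b)) :=
    (Real.continuous_rpow_const hp0).continuousOn
  rw [weightedGeomMean, ← operatorPerspective_const_mul hpow, ← operatorPerspective_affine ha hb]
  refine operatorPerspective_mono (hpow.const_mul _) (by fun_prop) fun t ht => ?_
  have hct : c ≤ t := spectrum_conjSqrt_ringInverse_subset_Ici ha hab ht
  have ht0 : 0 < t := by linarith
  calc kantorovich c ^ min p (1 - p) * t ^ p
    _ ≤ kantorovich t ^ min p (1 - p) * t ^ p := by
      gcongr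
      · exact (kantorovich_pos (by linarith)).le
      · exact kantorovich_le_kantorovich (by linarith) hct (by nlinarith)
    _ ≤ 1 - p + p * t := kantorovich_rpow_min_mul_rpow_le ht0 hp0 hp1

lemma le_kantorovich_rpow_max_smul_weightedGeomMean (ha : IsStrictlyPositive a) {c d : ℝ}
    (hc : 0 < c) (hcd : 1 ≤ c * d) (hlow : c • a ≤ b) (hup : b ≤ d • a) (p : ℝ) :
    (1 - p) • a + p • b ≤ kantorovich d ^ max p (1 - p) • weightedGeomMean a b p := by
  have hb : IsSelfAdjoint b := .of_ge hlow (.smul (.all c) ha.isSelfAdjoint)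
  have hct : ∀ t ∈ spectrum ℝ (conjSqrt a⁻¹ʳ b), c ≤ t :=
    spectrum_conjSqrt_ringInverse_subset_Ici ha hlow
  have hpow : ContinuousOn (fun t : ℝ => t ^ p) (spectrum ℝ (conjSqrt a⁻¹ʳ b)) :=
    continuousOn_id.rpow_const fun t ht => .inl (hc.trans_le (hct t ht)).ne'
  rw [weightedGeomMean, ← operatorPerspective_const_mul hpow, ← operatorPerspective_affine ha hb]
  refine operatorPerspective_mono (by fun_prop) (hpow.const_mul _) fun t ht => ?_
  have ht0 : 0 < t := hc.trans_le (hct t ht)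
  have htd : t ≤ d := spectrum_conjSqrt_ringInverse_subset_Iic ha hup ht
  calc 1 - p + p * t
    _ ≤ kantorovich t ^ max p (1 - p) * t ^ p := le_kantorovich_rpow_max_mul_rpow ht0 p
    _ ≤ kantorovich d ^ max p (1 - p) * t ^ p := by
      gcongr
      · exact (kantorovich_pos ht0).le
      · linarith [le_max_left p (1 - p), le_max_right p (1 - p)]
      · exact kantorovich_le_kantorovich ht0 htd (by nlinarith [hct t ht])

end Perspective

theorem stmt14_general {A B : Type*}
    [PartialOrder A] [Ring A] [StarRing A] [TopologicalSpace A] [StarOrderedRing A]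
    [Algebra ℝ A] [StarModule ℝ A] [ContinuousFunctionalCalculus ℝ A IsSelfAdjoint]
    [NonnegSpectrumClass ℝ A] [IsSemitopologicalRing A] [T2Space A]
    [PartialOrder B] [Ring B] [StarRing B] [TopologicalSpace B] [StarOrderedRing B]
    [Algebra ℝ B] [StarModule ℝ B] [ContinuousFunctionalCalculus ℝ B IsSelfAdjoint]
    [NonnegSpectrumClass ℝ B] [IsSemitopologicalRing B] [T2Space B]
    (Φ : A →ₚ[ℝ] B) {a b : A} (ha : IsStrictlyPositive a) (hΦa : IsStrictlyPositive (Φ a))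
    {h h' : ℝ} (hh' : 1 ≤ h') (hh'h : h' ≤ h) (hlow : h' • a ≤ b) (hup : b ≤ h • a)
    {p : ℝ} (hp0 : 0 ≤ p) (hp1 : p ≤ 1) :
    (kantorovich h' ^ min p (1 - p) / kantorovich h ^ max p (1 - p)) •
        Φ (weightedGeomMean a b p) ≤
      (1 / kantorovich h ^ max p (1 - p)) • Φ ((1 - p) • a + p • b) ∧
    (1 / kantorovich h ^ max p (1 - p)) • Φ ((1 - p) • a + p • b) ≤
      weightedGeomMean (Φ a) (Φ b) p ∧
    weightedGeomMean (Φ a) (Φ b) p ≤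
      (1 / kantorovich h' ^ min p (1 - p)) • Φ ((1 - p) • a + p • b) ∧
    (1 / kantorovich h' ^ min p (1 - p)) • Φ ((1 - p) • a + p • b) ≤
      (kantorovich h ^ max p (1 - p) / kantorovich h' ^ min p (1 - p)) •
        Φ (weightedGeomMean a b p) := by
  have hk : 0 < kantorovich h' ^ min p (1 - p) :=
    Real.rpow_pos_of_pos (kantorovich_pos (by linarith)) _
  have hK : 0 < kantorovich h ^ max p (1 - p) :=
    Real.rpow_pos_of_pos (kantorovich_pos (by linarith)) _
  have hmul : 1 ≤ h' * h := one_le_mul_of_one_le_of_one_le hh' (hh'.trans hh'h)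
  have hΦlow : h' • Φ a ≤ Φ b := map_smul Φ h' a ▸ OrderHomClass.mono Φ hlow
  have hΦup : Φ b ≤ h • Φ a := map_smul Φ h a ▸ OrderHomClass.mono Φ hup
  have hgeom := OrderHomClass.mono Φ
    (kantorovich_rpow_min_smul_weightedGeomMean_le ha hh' hlow hp0 hp1)
  have harith := OrderHomClass.mono Φ
    (le_kantorovich_rpow_max_smul_weightedGeomMean ha (by linarith) hmul hlow hup p)
  have hΦgeom := kantorovich_rpow_min_smul_weightedGeomMean_le hΦa hh' hΦlow hp0 hp1
  have hΦarith :=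
    le_kantorovich_rpow_max_smul_weightedGeomMean hΦa (by linarith) hmul hΦlow hΦup p
  simp only [← map_smul, ← map_add] at hΦgeom hΦarith
  rw [map_smul] at hgeom harith
  simp only [div_eq_inv_mul, mul_one, mul_smul]
  exact ⟨smul_le_smul_of_nonneg_left hgeom (inv_pos.2 hK).le, (inv_smul_le_iff_of_pos hK).2 hΦarith,
    (le_inv_smul_iff_of_pos hk).2 hΦgeom, smul_le_smul_of_nonneg_left harith (inv_pos.2 hk).le⟩

section Matrix

open scoped MatrixOrder

variable {n m : Type*} [Fintype n] [Fintype m]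

/-- A linear map of complex matrices preserving positive semidefiniteness, as a bundled positive
map for the Loewner order; only its real-linear structure is kept. -/
noncomputable def positiveMapOfPosSemidef (Φ : Matrix n n ℂ →ₗ[ℂ] Matrix m m ℂ)
    (hΦ : ∀ X : Matrix n n ℂ, X.PosSemidef → (Φ X).PosSemidef) :
    Matrix n n ℂ →ₚ[ℝ] Matrix m m ℂ :=
  .mk₀ (Φ.restrictScalars ℝ) fun X hX => (hΦ X hX.posSemidef).nonneg

variable [DecidableEq n] {A : Matrix n n ℂ}

lemma mrpow_eq_rpow (hA : A.PosSemidef) (r : ℝ) : mrpow A r = CFC.rpow A r :=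
  (CFC.rpow_eq_cfc_real hA.nonneg).symm

lemma natu_eq_weightedGeomMean (hA : A.PosDef) (B : Matrix n n ℂ) (p : ℝ) :
    natu A B p = weightedGeomMean A B p := by
  have hsqrt : mrpow A (1 / 2) = CFC.sqrt A := by
    rw [mrpow_eq_rpow hA.posSemidef, CFC.sqrt_eq_rpow, CFC.rpow_eq_pow]
  have hsqrt_inv : mrpow A (-(1 / 2)) = CFC.sqrt (Ring.inverse A) := by
    rw [mrpow_eq_rpow hA.posSemidef, CFC.inverse_eq_rpow_neg_one hA.isStrictlyPositive,
      CFC.sqrt_eq_rpow, CFC.rpow_rpow A _ _ (by norm_num) hA.isStrictlyPositive, CFC.rpow_eq_pow]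
    norm_num
  rw [natu, hsqrt, hsqrt_inv, mrpow, weightedGeomMean, operatorPerspective, CFC.conjSqrt_apply,
    CFC.conjSqrt_apply]

end Matrix

theorem stmt14 {n m : Type*} [Fintype n] [DecidableEq n] [Fintype m] [DecidableEq m]
    {A B : Matrix n n ℂ} (hA : A.PosDef) (hB : B.PosDef)
    {h h' : ℝ} (hh'1 : 1 < h') (hh'h : h' ≤ h)
    (hlow : loe (h' • A) B) (hup : loe B (h • A))
    (Φ : Matrix n n ℂ →ₗ[ℂ] Matrix m m ℂ)
    (hΦpos : ∀ X : Matrix n n ℂ, X.PosSemidef → (Φ X).PosSemidef)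
    (hΦA : (Φ A).PosDef) (hΦB : (Φ B).PosDef)
    {p : ℝ} (hp0 : 0 ≤ p) (hp1 : p ≤ 1) :
    loe (((((h' + 1) ^ (2 : ℕ) / (4 * h')) ^ min p (1 - p)) /
          (((h + 1) ^ (2 : ℕ) / (4 * h)) ^ max p (1 - p))) • Φ (natu A B p))
      ((1 / (((h + 1) ^ (2 : ℕ) / (4 * h)) ^ max p (1 - p))) • Φ ((1 - p) • A + p • B)) ∧
    loe ((1 / (((h + 1) ^ (2 : ℕ) / (4 * h)) ^ max p (1 - p))) • Φ ((1 - p) • A + p • B))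
      (natu (Φ A) (Φ B) p) ∧
    loe (natu (Φ A) (Φ B) p)
      ((1 / (((h' + 1) ^ (2 : ℕ) / (4 * h')) ^ min p (1 - p))) • Φ ((1 - p) • A + p • B)) ∧
    loe ((1 / (((h' + 1) ^ (2 : ℕ) / (4 * h')) ^ min p (1 - p))) • Φ ((1 - p) • A + p • B))
      (((((h + 1) ^ (2 : ℕ) / (4 * h)) ^ max p (1 - p)) /
          (((h' + 1) ^ (2 : ℕ) / (4 * h')) ^ min p (1 - p))) • Φ (natu A B p)) := by
  open scoped MatrixOrder in
  rw [natu_eq_weightedGeomMean hA, natu_eq_weightedGeomMean hΦA]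
  exact stmt14_general (positiveMapOfPosSemidef Φ hΦpos) hA.isStrictlyPositive
    hΦA.isStrictlyPositive hh'1.le hh'h hlow hup hp0 hp1
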